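/- Let n be a positive integer, let ℍ be the hyperbolic plane, let C ≥ 1 be a real number, let X' be a subset of the Euclidean space ℝⁿ, and let f : X' → ℍ be a C-Lipschitz map. Then there exists a C-Lipschitz map F : ℝⁿ → ℍ with F(x) = f(x) for all x ∈ X'. -/

import Mathlib

open scoped UpperHalfPlane

/-!
Fix a finite set of points `a` and a new point `x`, and put `r a = K * dist x a`. A minimiser `y₀`
of `y ↦ ∑ a, c a y ^ 2`, where `c a y = (dist y (f a) ^ 2 - r a ^ 2)⁺`, behaves like the
barycentre of the points `f a` with weights `c a y₀`, which in nonpositive curvature bounds the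
pairwise distances of the `f a` from below. Nonnegative curvature at `x`, with the same weights,
bounds the pairwise distances of the `a` from above. Since `f` is `K`-Lipschitz, the two bounds
are compatible only if all weights vanish, so `y₀` is an admissible value at `x`. Compactness of
closed balls passes from finite sets to arbitrary ones, and Zorn's lemma from one new point to the
whole space.

The curvature bound of `ℍ` rests on the midpoint identity
`cosh (dist p z) + cosh (dist p w) = 2 * cosh (dist z w / 2) * cosh (dist p m)`
and on the convexity of `s ↦ cosh √s`.
-/

open Filter Topology Set Metric
open scoped NNReal

/-- The semiparallelogram law (the CN inequality of Bruhat and Tits): any two points have a point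
that is at least as close to every other point as a Euclidean midpoint would be. For complete spaces
this is the CAT(0) condition; it is the curvature assumption on the target. -/
class SemiparallelogramLaw (Y : Type*) [PseudoMetricSpace Y] : Prop where
  exists_midpoint (z w : Y) : ∃ m : Y, ∀ p : Y,
    dist m p ^ 2 ≤ (dist z p ^ 2 + dist w p ^ 2) / 2 - dist z w ^ 2 / 4

/-- The Lang–Schröder–Sturm inequality: for nonnegative weights `c` and any base point `x`, the
sum of the comparison inner products `(dist x a ^ 2 + dist x b ^ 2 - dist a b ^ 2) / 2`, weighted by
`c a * c b`, is nonnegative. For complete geodesic spaces this is nonnegative curvature in the sense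
of Alexandrov; it is the curvature assumption on the source. -/
class LangSchroderSturmInequality (X : Type*) [PseudoMetricSpace X] : Prop where
  sum_sum_nonneg (s : Finset X) (c : X → ℝ) (hc : ∀ a ∈ s, 0 ≤ c a) (x : X) :
    0 ≤ ∑ a ∈ s, ∑ b ∈ s, c a * c b * (dist x a ^ 2 + dist x b ^ 2 - dist a b ^ 2)

/-! ### Inner product spaces -/

instance langSchroderSturmInequality_of_innerProductSpace {E : Type*} [NormedAddCommGroup E]
    [InnerProductSpace ℝ E] : LangSchroderSturmInequality E where
  sum_sum_nonneg s c _ x := by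
    have polarization (a b : E) :
        dist x a ^ 2 + dist x b ^ 2 - dist a b ^ 2 = 2 * inner ℝ (a - x) (b - x) := by
      have h := norm_sub_sq_real (a - x) (b - x)
      rw [sub_sub_sub_cancel_right] at h
      rw [dist_comm x a, dist_comm x b, dist_eq_norm, dist_eq_norm, dist_eq_norm, h]
      ring
    calc 0 ≤ 2 * ‖∑ a ∈ s, c a • (a - x)‖ ^ 2 := by positivity
      _ = _ := by
        rw [← real_inner_self_eq_norm_sq, sum_inner, Finset.mul_sum]
        refine Finset.sum_congr rfl fun a _ => ?_
        rw [inner_sum, Finset.mul_sum]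
        refine Finset.sum_congr rfl fun b _ => ?_
        rw [real_inner_smul_left, real_inner_smul_right, polarization]
        ring

/-! ### The hyperbolic plane -/

lemma map_add_map_le_of_convexOn {𝕜 : Type*} [Field 𝕜] [LinearOrder 𝕜] [IsStrictOrderedRing 𝕜]
    {S : Set 𝕜} {φ : 𝕜 → 𝕜} (hφ : ConvexOn 𝕜 S φ) {p q u v : 𝕜} (hp : p ∈ S) (hq : q ∈ S)
    (hu : u ∈ Icc p q) (huv : u + v = p + q) : φ u + φ v ≤ φ p + φ q := by
  obtain ⟨a, b, ha, hb, hab, rfl⟩ := Icc_subset_segment (𝕜 := 𝕜) hu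
  obtain rfl : v = b • p + a • q := by
    simp only [smul_eq_mul] at huv ⊢
    linear_combination huv - (p + q) * hab
  have hφu := hφ.2 hp hq ha hb hab
  have hφv := hφ.2 hp hq hb ha (by rwa [add_comm])
  simp only [smul_eq_mul] at hφu hφv ⊢
  linear_combination hφu + hφv + (φ p + φ q) * hab

-- The power series of `cosh √s` in `s` has nonnegative coefficients.
lemma convexOn_cosh_sqrt : ConvexOn ℝ (Ici 0) fun s : ℝ => Real.cosh √s := by
  have hasSum {s : ℝ} (hs : s ∈ Ici 0) :
      HasSum (fun n => s ^ n / (Nat.factorial (2 * n) : ℝ)) (Real.cosh √s) := by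
    simpa only [pow_mul, Real.sq_sqrt hs] using Real.hasSum_cosh √s
  refine ⟨convex_Ici 0, fun s hs t ht a b ha hb hab => ?_⟩
  refine hasSum_le (fun n => ?_) (hasSum (convex_Ici 0 hs ht ha hb hab))
    (((hasSum hs).mul_left a).add ((hasSum ht).mul_left b))
  rw [← mul_div_assoc, ← mul_div_assoc, ← add_div]
  gcongr
  exact (convexOn_pow n).2 hs ht ha hb hab

lemma sq_add_sq_le_of_cosh_add_cosh_le {P Q a b : ℝ} (hQb : Q ^ 2 ≤ b ^ 2) (hbP : b ^ 2 ≤ P ^ 2)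
    (h : Real.cosh P + Real.cosh Q ≤ Real.cosh a + Real.cosh b) :
    P ^ 2 + Q ^ 2 ≤ a ^ 2 + b ^ 2 := by
  by_contra! hlt
  have cosh_sqrt_sq (x : ℝ) : Real.cosh √(x ^ 2) = Real.cosh x := by
    rw [Real.sqrt_sq_eq_abs, Real.cosh_abs]
  have hconvex := map_add_map_le_of_convexOn convexOn_cosh_sqrt (sq_nonneg Q) (sq_nonneg P)
    ⟨hQb, hbP⟩ (v := P ^ 2 + Q ^ 2 - b ^ 2) (by ring)
  have hmono : Real.cosh a < Real.cosh √(P ^ 2 + Q ^ 2 - b ^ 2) := by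
    rw [Real.cosh_lt_cosh, abs_of_nonneg (Real.sqrt_nonneg _)]
    exact Real.lt_sqrt_of_sq_lt (by rw [sq_abs]; linarith)
  simp only [cosh_sqrt_sq] at hconvex
  linarith

lemma one_add_cosh_eq_two_mul_cosh_half_sq (x : ℝ) :
    1 + Real.cosh x = 2 * Real.cosh (x / 2) ^ 2 := by
  have h := Real.cosh_two_mul (x / 2)
  rw [Real.sinh_sq, mul_div_cancel₀ x two_ne_zero] at h
  linear_combination h

lemma exists_cosh_dist_add_cosh_dist_eq (z w : ℍ) : ∃ m : ℍ, ∀ p : ℍ,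
    Real.cosh (dist p z) + Real.cosh (dist p w) =
      2 * Real.cosh (dist z w / 2) * Real.cosh (dist p m) := by
  have : 0 < z.im := z.im_pos
  have : 0 < w.im := w.im_pos
  set k := Real.cosh (dist z w / 2) with hk
  have hk_pos : 0 < k := Real.cosh_pos _
  have hk_sq : 4 * k ^ 2 * z.im * w.im = (z.re - w.re) ^ 2 + (z.im + w.im) ^ 2 := by
    have h := one_add_cosh_eq_two_mul_cosh_half_sq (dist z w)
    rw [UpperHalfPlane.cosh_dist', ← hk] at h
    field_simp at h
    linear_combination -h
  let m : ℍ := ⟨⟨(z.re * w.im + w.re * z.im) / (z.im + w.im),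
    2 * k * z.im * w.im / (z.im + w.im)⟩, by positivity⟩
  have hm_re : m.re = (z.re * w.im + w.re * z.im) / (z.im + w.im) := rfl
  have hm_im : m.im = 2 * k * z.im * w.im / (z.im + w.im) := rfl
  refine ⟨m, fun p => ?_⟩
  have : 0 < p.im := p.im_pos
  simp only [UpperHalfPlane.cosh_dist', hm_re, hm_im]
  field_simp
  linear_combination (-(z.im * w.im)) * hk_sq

instance semiparallelogramLaw_upperHalfPlane : SemiparallelogramLaw ℍ where
  exists_midpoint z w := by
    obtain ⟨m, hm⟩ := exists_cosh_dist_add_cosh_dist_eq z w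
    set D := dist z w / 2 with hD
    have hw : dist w m = D := by
      refine Real.cosh_strictMonoOn.injOn dist_nonneg (div_nonneg dist_nonneg zero_le_two) ?_
      refine mul_left_cancel₀ (mul_pos two_pos (Real.cosh_pos D)).ne' ?_
      rw [← hm w, dist_self, Real.cosh_zero, dist_comm w z, add_comm,
        one_add_cosh_eq_two_mul_cosh_half_sq, ← hD]
      ring
    refine ⟨m, fun p => ?_⟩
    have hlower : (D - dist p m) ^ 2 ≤ dist w p ^ 2 := by
      rw [← hw, sq_le_sq, abs_of_nonneg dist_nonneg]
      exact abs_dist_sub_le w p m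
    have hupper : dist w p ^ 2 ≤ (D + dist p m) ^ 2 := by
      rw [← hw, dist_comm p m]
      gcongr
      exact dist_triangle w m p
    have hcosh : Real.cosh (D + dist p m) + Real.cosh (D - dist p m) =
        Real.cosh (dist z p) + Real.cosh (dist w p) := by
      rw [dist_comm z p, dist_comm w p, hm p, Real.cosh_add, Real.cosh_sub]
      ring
    have hsq := sq_add_sq_le_of_cosh_add_cosh_le hlower hupper hcosh.le
    rw [dist_comm m p]
    linear_combination hsq / 2 + (D + dist z w / 2) * hD

/-! ### Minimising the excess in nonpositive curvature -/

lemma posPart_add_sq_le {R : Type*} [Ring R] [LinearOrder R] [IsStrictOrderedRing R] (a b : R) :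
    (a + b)⁺ ^ 2 ≤ (a⁺ + b) ^ 2 := by
  rw [sq_le_sq, abs_of_nonneg (posPart_nonneg _)]
  calc (a + b)⁺ ≤ (a⁺ + b)⁺ := posPart_mono (by gcongr; exact le_posPart a)
    _ ≤ |a⁺ + b| := sup_le (le_abs_self _) (abs_nonneg _)

section Target

variable {Y : Type*} [PseudoMetricSpace Y]

lemma exists_dyadic_point [SemiparallelogramLaw Y] (z w : Y) (n : ℕ) : ∃ m : Y, ∀ p : Y,
    dist m p ^ 2 ≤ (1 - (1 / 2) ^ n) * dist z p ^ 2 + (1 / 2) ^ n * dist w p ^ 2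
      - (1 / 2) ^ n * (1 - (1 / 2) ^ n) * dist z w ^ 2 := by
  induction n with
  | zero => exact ⟨w, fun p => by simp⟩
  | succ n ih =>
    obtain ⟨y, hy⟩ := ih
    obtain ⟨m, hm⟩ := SemiparallelogramLaw.exists_midpoint z y
    refine ⟨m, fun p => ?_⟩
    rw [pow_succ ((1 : ℝ) / 2) n]
    have he_nonneg : (0 : ℝ) ≤ (1 / 2) ^ n := by positivity
    have he_le_one : ((1 : ℝ) / 2) ^ n ≤ 1 := pow_le_one₀ (by norm_num) (by norm_num)
    generalize ((1 : ℝ) / 2) ^ n = e at *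
    have hyw : dist y w ≤ (1 - e) * dist z w := by
      refine le_of_sq_le_sq ?_ (mul_nonneg (sub_nonneg.2 he_le_one) dist_nonneg)
      have h := hy w
      rw [dist_self] at h
      linear_combination h
    have hzy : (e * dist z w) ^ 2 ≤ dist z y ^ 2 := by
      gcongr
      linarith [dist_triangle z y w]
    linear_combination hm p + hy p / 2 + hzy / 4

/-- The amount by which the square of the distance from `y` to `p` exceeds `r ^ 2`; for `0 ≤ r` it
vanishes exactly when `y` lies in the closed ball of radius `r` around `p`. -/
noncomputable def excess (r : ℝ) (p y : Y) : ℝ := (dist y p ^ 2 - r ^ 2)⁺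

lemma excess_nonneg (r : ℝ) (p y : Y) : 0 ≤ excess r p y := posPart_nonneg _

lemma dist_sq_sub_sq_le_excess (r : ℝ) (p y : Y) : dist y p ^ 2 - r ^ 2 ≤ excess r p y :=
  le_posPart _

lemma continuous_excess (r : ℝ) (p : Y) : Continuous (excess r p) := by
  unfold excess
  simp only [posPart_def]
  fun_prop

lemma excess_mul_dist_sq_sub_sq (r : ℝ) (p y : Y) :
    excess r p y * (dist y p ^ 2 - r ^ 2) = excess r p y ^ 2 := by
  rcases le_total (dist y p ^ 2 - r ^ 2) 0 with h | h
  · simp [excess, posPart_eq_zero.2 h]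
  · rw [excess, posPart_eq_self.2 h, ← sq]

lemma dist_le_of_excess_eq_zero {r : ℝ} (hr : 0 ≤ r) {p y : Y} (h : excess r p y = 0) :
    dist y p ≤ r :=
  le_of_sq_le_sq (sub_nonpos.1 (h ▸ dist_sq_sub_sq_le_excess r p y)) hr

lemma tendsto_excess_cocompact_atTop [ProperSpace Y] (r : ℝ) (p : Y) :
    Tendsto (excess r p) (cocompact Y) atTop :=
  tendsto_atTop_mono (dist_sq_sub_sq_le_excess r p) <| tendsto_atTop_add_const_right _ _ <|
    (tendsto_pow_atTop two_ne_zero).comp (tendsto_dist_right_cocompact_atTop p)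

variable {ι : Type*} {s : Finset ι} {r : ι → ℝ} {p : ι → Y} {y₀ : Y}

lemma exists_forall_sum_excess_sq_le [ProperSpace Y] (hs : s.Nonempty) (r : ι → ℝ) (p : ι → Y) :
    ∃ y₀, ∀ y, ∑ i ∈ s, excess (r i) (p i) y₀ ^ 2 ≤ ∑ i ∈ s, excess (r i) (p i) y ^ 2 := by
  obtain ⟨j, hj⟩ := hs
  have : Nonempty Y := ⟨p j⟩
  refine Continuous.exists_forall_le
    (continuous_finsetSum s fun i _ => (continuous_excess (r i) (p i)).pow 2) ?_
  refine tendsto_atTop_mono (fun y => ?_)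
    ((tendsto_pow_atTop two_ne_zero).comp (tendsto_excess_cocompact_atTop (r j) (p j)))
  exact Finset.single_le_sum (f := fun i => excess (r i) (p i) y ^ 2) (fun i _ => sq_nonneg _) hj

-- The first-order condition along the (dyadic) geodesic from the minimiser `y₀` to `z`.
lemma sum_excess_mul_nonneg_of_forall_le [SemiparallelogramLaw Y]
    (hmin : ∀ y, ∑ i ∈ s, excess (r i) (p i) y₀ ^ 2 ≤ ∑ i ∈ s, excess (r i) (p i) y ^ 2) (z : Y) :
    0 ≤ ∑ i ∈ s, excess (r i) (p i) y₀ *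
      (dist z (p i) ^ 2 - dist y₀ (p i) ^ 2 - dist y₀ z ^ 2) := by
  set c : ι → ℝ := fun i => excess (r i) (p i) y₀
  let slope (e : ℝ) (i : ι) : ℝ := dist z (p i) ^ 2 - dist y₀ (p i) ^ 2 - (1 - e) * dist y₀ z ^ 2
  let quotient (e : ℝ) : ℝ := ∑ i ∈ s, (2 * c i * slope e i + e * slope e i ^ 2)
  have quotient_nonneg (n : ℕ) : 0 ≤ quotient ((1 / 2) ^ n) := by
    obtain ⟨m, hm⟩ := exists_dyadic_point y₀ z n
    have he : (0 : ℝ) < (1 / 2) ^ n := by positivity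
    generalize ((1 : ℝ) / 2) ^ n = e at *
    have excess_le (i : ι) : excess (r i) (p i) m ^ 2 ≤ (c i + e * slope e i) ^ 2 := by
      refine le_trans ?_ (posPart_add_sq_le _ _)
      have hle : dist m (p i) ^ 2 - r i ^ 2 ≤ dist y₀ (p i) ^ 2 - r i ^ 2 + e * slope e i := by
        linear_combination hm (p i)
      exact pow_le_pow_left₀ (posPart_nonneg _) (posPart_mono hle) 2
    refine nonneg_of_mul_nonneg_right (a := e) ?_ he
    calc 0 ≤ ∑ i ∈ s, (c i + e * slope e i) ^ 2 - ∑ i ∈ s, c i ^ 2 :=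
          sub_nonneg.2 ((hmin m).trans (Finset.sum_le_sum fun i _ => excess_le i))
      _ = e * quotient e := by
        rw [← Finset.sum_sub_distrib, Finset.mul_sum]
        exact Finset.sum_congr rfl fun i _ => by ring
  have quotient_continuous : Continuous quotient := by
    simp only [quotient, slope]
    fun_prop
  have tendsto_dyadic : Tendsto (fun n : ℕ => ((1 : ℝ) / 2) ^ n) atTop (𝓝 0) :=
    tendsto_pow_atTop_nhds_zero_of_lt_one (by norm_num) (by norm_num)
  have quotient_zero : quotient 0 = 2 * ∑ i ∈ s, c i * slope 0 i := by
    simp only [quotient, zero_mul, add_zero, mul_assoc, Finset.mul_sum]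
  have limit_nonneg : 0 ≤ quotient 0 :=
    ge_of_tendsto' ((quotient_continuous.tendsto 0).comp tendsto_dyadic) quotient_nonneg
  rw [quotient_zero] at limit_nonneg
  simpa [slope] using limit_nonneg

lemma sum_sum_excess_mul_nonneg_of_forall_le [SemiparallelogramLaw Y]
    (hmin : ∀ y, ∑ i ∈ s, excess (r i) (p i) y₀ ^ 2 ≤ ∑ i ∈ s, excess (r i) (p i) y ^ 2) :
    0 ≤ ∑ i ∈ s, ∑ j ∈ s, excess (r i) (p i) y₀ * excess (r j) (p j) y₀ *
      (dist (p i) (p j) ^ 2 - dist y₀ (p i) ^ 2 - dist y₀ (p j) ^ 2) := by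
  refine Finset.sum_nonneg fun i _ => ?_
  calc 0 ≤ excess (r i) (p i) y₀ * ∑ j ∈ s, excess (r j) (p j) y₀ *
        (dist (p i) (p j) ^ 2 - dist y₀ (p j) ^ 2 - dist y₀ (p i) ^ 2) :=
        mul_nonneg (excess_nonneg _ _ _) (sum_excess_mul_nonneg_of_forall_le hmin (p i))
    _ = _ := by
      rw [Finset.mul_sum]
      exact Finset.sum_congr rfl fun j _ => by ring

end Target

lemma eq_zero_of_sum_sum_mul_mul_add_nonpos {ι R : Type*} [CommRing R] [LinearOrder R]
    [IsStrictOrderedRing R] {s : Finset ι} {c : ι → R} (hc : ∀ i ∈ s, 0 ≤ c i)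
    (h : ∑ i ∈ s, ∑ j ∈ s, c i * c j * (c i + c j) ≤ 0) {i : ι} (hi : i ∈ s) : c i = 0 := by
  have term_nonneg : ∀ i ∈ s, ∀ j ∈ s, 0 ≤ c i * c j * (c i + c j) := fun i hi j hj =>
    mul_nonneg (mul_nonneg (hc i hi) (hc j hj)) (add_nonneg (hc i hi) (hc j hj))
  have row_nonneg : ∀ i ∈ s, 0 ≤ ∑ j ∈ s, c i * c j * (c i + c j) := fun i hi =>
    Finset.sum_nonneg (term_nonneg i hi)
  have row_eq_zero := (Finset.sum_eq_zero_iff_of_nonneg row_nonneg).1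
    (h.antisymm (Finset.sum_nonneg row_nonneg)) i hi
  simpa using (Finset.sum_eq_zero_iff_of_nonneg (term_nonneg i hi)).1 row_eq_zero i hi

/-! ### Extension of Lipschitz maps -/

section Extension

variable {X Y : Type*} [PseudoMetricSpace X] {K : ℝ≥0} {f : X → Y}

lemma exists_forall_dist_le_of_lipschitzOnWith_finset [LangSchroderSturmInequality X]
    [PseudoMetricSpace Y] [ProperSpace Y] [SemiparallelogramLaw Y] {s : Finset X}
    (hf : LipschitzOnWith K f s) (x : X) : ∃ y, ∀ a ∈ s, dist y (f a) ≤ K * dist x a := by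
  rcases s.eq_empty_or_nonempty with rfl | hs
  · exact ⟨f x, by simp⟩
  obtain ⟨y₀, hmin⟩ := exists_forall_sum_excess_sq_le hs (fun a => K * dist x a) f
  set c : X → ℝ := fun a => excess (K * dist x a) (f a) y₀
  have hc (a : X) : 0 ≤ c a := excess_nonneg _ _ _
  have htarget := sum_sum_excess_mul_nonneg_of_forall_le hmin
  have hsource := mul_nonneg (sq_nonneg (K : ℝ))
    (LangSchroderSturmInequality.sum_sum_nonneg s c (fun a _ => hc a) x)
  have hterm : ∀ a ∈ s, ∀ b ∈ s,
      c a * c b * (c a + c b) + c a * c b * (dist (f a) (f b) ^ 2 - dist y₀ (f a) ^ 2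
        - dist y₀ (f b) ^ 2) ≤
      -(K ^ 2 * (c a * c b * (dist x a ^ 2 + dist x b ^ 2 - dist a b ^ 2))) := by
    intro a ha b hb
    have hdist : dist (f a) (f b) ^ 2 ≤ (K * dist a b) ^ 2 := by
      gcongr
      exact hf.dist_le_mul a ha b hb
    have hca := excess_mul_dist_sq_sub_sq (K * dist x a) (f a) y₀
    have hcb := excess_mul_dist_sq_sub_sq (K * dist x b) (f b) y₀
    have hcc := mul_le_mul_of_nonneg_left hdist (mul_nonneg (hc a) (hc b))
    linear_combination hcc - c b * hca - c a * hcb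
  have hsum := Finset.sum_le_sum fun a ha => Finset.sum_le_sum (hterm a ha)
  simp only [Finset.sum_add_distrib, Finset.sum_neg_distrib, ← Finset.mul_sum] at hsum
  refine ⟨y₀, fun a ha => dist_le_of_excess_eq_zero (by positivity) ?_⟩
  refine eq_zero_of_sum_sum_mul_mul_add_nonpos (c := c) (fun a _ => hc a) ?_ ha
  linarith

lemma exists_forall_dist_le_of_lipschitzOnWith [LangSchroderSturmInequality X]
    [PseudoMetricSpace Y] [ProperSpace Y] [SemiparallelogramLaw Y] {s : Set X}
    (hf : LipschitzOnWith K f s) (x : X) : ∃ y, ∀ a ∈ s, dist y (f a) ≤ K * dist x a := by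
  classical
  rcases s.eq_empty_or_nonempty with rfl | ⟨a₀, ha₀⟩
  · exact ⟨f x, by simp⟩
  let ball (a : s) : Set Y := closedBall (f a) (K * dist x a)
  obtain ⟨y, -, hy⟩ := (isCompact_closedBall (f a₀) (K * dist x a₀)).inter_iInter_nonempty ball
    (fun _ => isClosed_closedBall) fun u => by
      obtain ⟨y, hy⟩ := exists_forall_dist_le_of_lipschitzOnWith_finset
        (s := insert a₀ (u.map (Function.Embedding.subtype _))) (hf.mono (by
          simp [insert_subset_iff, ha₀])) x
      exact ⟨y, hy a₀ (by simp), mem_iInter₂.2 fun a ha => hy a (by simp [ha])⟩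
  exact ⟨y, fun a ha => mem_iInter.1 hy ⟨a, ha⟩⟩

/-- When `Y` is a metric space, `G` is the graph of a `K`-Lipschitz partial map from `X` to `Y`.
Partial maps are encoded by their graphs so that extension of maps is inclusion of sets. -/
def IsLipschitzGraph [PseudoMetricSpace Y] (K : ℝ≥0) (G : Set (X × Y)) : Prop :=
  ∀ p ∈ G, ∀ q ∈ G, dist p.2 q.2 ≤ K * dist p.1 q.1

lemma IsLipschitzGraph.eq [MetricSpace Y] {G : Set (X × Y)} (hG : IsLipschitzGraph K G) {a : X}
    {b b' : Y} (hb : (a, b) ∈ G) (hb' : (a, b') ∈ G) : b = b' := by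
  simpa using hG _ hb _ hb'

lemma IsLipschitzGraph.insert [PseudoMetricSpace Y] {G : Set (X × Y)} (hG : IsLipschitzGraph K G)
    {x : X} {y : Y} (hy : ∀ q ∈ G, dist y q.2 ≤ K * dist x q.1) :
    IsLipschitzGraph K (insert (x, y) G) := by
  rintro p (rfl | hp) q (rfl | hq)
  · simp
  · exact hy q hq
  · rw [dist_comm, dist_comm p.1]
    exact hy p hp
  · exact hG p hp q hq

lemma IsLipschitzGraph.exists_subset_maximal [PseudoMetricSpace Y] {G : Set (X × Y)}
    (hG : IsLipschitzGraph K G) : ∃ M, G ⊆ M ∧ Maximal (IsLipschitzGraph K) M := by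
  refine zorn_subset_nonempty {G | IsLipschitzGraph K G} (fun c hc hchain _ => ?_) G hG
  refine ⟨⋃₀ c, ?_, fun _ => subset_sUnion_of_mem⟩
  rintro p ⟨S, hS, hp⟩ q ⟨T, hT, hq⟩
  rcases hchain.total hS hT with h | h
  · exact hc hT p (h hp) q hq
  · exact hc hS p hp q (h hq)

lemma exists_lipschitzWith_eqOn_of_one_point_extension [MetricSpace Y]
    (hext : ∀ (s : Set X) (f : X → Y), LipschitzOnWith K f s →
      ∀ x, ∃ y, ∀ a ∈ s, dist y (f a) ≤ K * dist x a)
    {s : Set X} (hf : LipschitzOnWith K f s) : ∃ F : X → Y, LipschitzWith K F ∧ EqOn F f s := by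
  have graph_f : IsLipschitzGraph K (s.graphOn f) := by
    rintro _ ⟨a, ha, rfl⟩ _ ⟨b, hb, rfl⟩
    exact hf.dist_le_mul a ha b hb
  obtain ⟨G, hfG, hG⟩ := graph_f.exists_subset_maximal
  have total (x : X) : ∃ y, (x, y) ∈ G := by
    have : Nonempty Y := ⟨f x⟩
    choose! g hg using fun (a : X) (ha : ∃ b, (a, b) ∈ G) => ha
    obtain ⟨y, hy⟩ := hext {a | ∃ b, (a, b) ∈ G} g
      (LipschitzOnWith.of_dist_le_mul fun a ha b hb => hG.prop _ (hg a ha) _ (hg b hb)) x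
    have hyG : ∀ q ∈ G, dist y q.2 ≤ K * dist x q.1 := fun q hq => by
      rw [hG.prop.eq hq (hg q.1 ⟨q.2, hq⟩)]
      exact hy q.1 ⟨q.2, hq⟩
    exact ⟨y, hG.le_of_ge (hG.prop.insert hyG) (subset_insert _ _) (mem_insert _ _)⟩
  choose F hF using total
  exact ⟨F, LipschitzWith.of_dist_le_mul fun x y => hG.prop _ (hF x) _ (hF y),
    fun a ha => hG.prop.eq (hF a) (hfG ⟨a, ha, rfl⟩)⟩

theorem stmt_11_general [LangSchroderSturmInequality X] [MetricSpace Y] [ProperSpace Y]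
    [SemiparallelogramLaw Y] [Nonempty Y] (C : ℝ) (hC : 0 ≤ C) (X' : Set X) (f : X' → Y)
    (hf : ∀ x y : X', dist (f x) (f y) ≤ C * dist (x : X) (y : X)) :
    ∃ F : X → Y, (∀ x y : X, dist (F x) (F y) ≤ C * dist x y) ∧ ∀ x : X', F x = f x := by
  lift C to ℝ≥0 using hC
  obtain ⟨g, rfl⟩ := Subtype.surjective_restrict (β := fun _ => Y) (· ∈ X') f
  obtain ⟨F, hF, hFg⟩ := exists_lipschitzWith_eqOn_of_one_point_extension
    (fun _ _ => exists_forall_dist_le_of_lipschitzOnWith)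
    (LipschitzOnWith.of_dist_le_mul fun a ha b hb => hf ⟨a, ha⟩ ⟨b, hb⟩)
  exact ⟨F, hF.dist_le_mul, fun x => hFg x.2⟩

end Extension

theorem stmt_11 (n : ℕ) (hn : 0 < n) (C : ℝ) (hC : 1 ≤ C)
    (X' : Set (EuclideanSpace ℝ (Fin n))) (f : X' → ℍ)
    (hf : ∀ x y : X',
      dist (f x) (f y) ≤ C * dist (x : EuclideanSpace ℝ (Fin n)) (y : EuclideanSpace ℝ (Fin n))) :
    ∃ F : EuclideanSpace ℝ (Fin n) → ℍ,
      (∀ x y : EuclideanSpace ℝ (Fin n), dist (F x) (F y) ≤ C * dist x y) ∧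
      ∀ x : X', F x = f x :=
  stmt_11_general C (zero_le_one.trans hC) X' f hf
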